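/- Convolutional stability: if ρ and σ are n-qudit stabilizer states, then ρ ⊠ σ is a stabilizer state. -/

import Mathlib

open scoped BigOperators ComplexOrder Classical ENNReal
open Matrix

namespace PaperQI

/-- The computational-basis index set `ℤ_d^n` for an `n`-qudit system. -/
abbrev QV (d n : ℕ) := Fin n → ZMod d

/-- Matrices (linear operators) on the `n`-qudit Hilbert space `(ℂ^d)^{⊗ n}`,
written in the computational basis indexed by `ℤ_d^n`. -/
abbrev Mat (d n : ℕ) := Matrix (QV d n) (QV d n) ℂ

/-- The character `ξ^z = exp(2πi z/d)` for `z ∈ ℤ_d`. -/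
noncomputable def ch (d : ℕ) (z : ZMod d) : ℂ :=
  Complex.exp (2 * Real.pi * Complex.I * (z.val : ℂ) / (d : ℂ))

/-- Dot product on `ℤ_d^n`. -/
def qdot {d n : ℕ} (p k : QV d n) : ZMod d := ∑ i, p i * k i

/-- The `n`-qudit Weyl operator `w(p,q) = ⊗_i ξ^{-2⁻¹ p_i q_i} Z^{p_i} X^{q_i}`
(for odd prime `d`).  Its matrix entries are
`w(p,q)[k+q, k] = ξ^{p·k + 2⁻¹ p·q}`. -/
noncomputable def weyl (d n : ℕ) [Fact (Nat.Prime d)] (p q : QV d n) : Mat d n :=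
  Matrix.of fun k' k =>
    if k' = k + q then ch d (qdot p k + (2 : ZMod d)⁻¹ * qdot p q) else 0

/-- `ρ` is an `n`-qudit state: positive semidefinite with trace one. -/
def IsState (d n : ℕ) [Fact (Nat.Prime d)] (ρ : Mat d n) : Prop :=
  ρ.PosSemidef ∧ ρ.trace = 1

/-- The characteristic function `Ξ_ρ(p,q) = Tr[ρ w(-p,-q)]`. -/
noncomputable def xi (d n : ℕ) [Fact (Nat.Prime d)] (ρ : Mat d n)
    (pq : QV d n × QV d n) : ℂ :=
  (ρ * weyl d n (-pq.1) (-pq.2)).trace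

/-- The mean state `M(ρ) = d^{-n} ∑_{|Ξ_ρ(p,q)| = 1} Ξ_ρ(p,q) w(p,q)`. -/
noncomputable def meanState (d n : ℕ) [Fact (Nat.Prime d)] (ρ : Mat d n) : Mat d n :=
  ((d : ℂ) ^ n)⁻¹ •
    ∑ pq : QV d n × QV d n,
      if ‖xi d n ρ pq‖ = 1 then xi d n ρ pq • weyl d n pq.1 pq.2 else 0

/-- `ρ` is a minimal stabilizer-projection state (MSPS): for some `r ≤ n` there are
mutually commuting Weyl operators `w(p_i,q_i)`, `i = 1,…,r`, whose labels generate a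
subgroup of `V^n` of order `d^r`, and phases `x ∈ ℤ_d^r`, such that
`ρ = d^{-(n-r)} ∏_i ( (1/d) ∑_{k ∈ ℤ_d} (ξ^{x_i} w(p_i,q_i))^k )`. -/
noncomputable def IsMSPS (d n : ℕ) [Fact (Nat.Prime d)] (ρ : Mat d n) : Prop :=
  ∃ r : ℕ, r ≤ n ∧
    ∃ (p q : Fin r → QV d n) (x : Fin r → ZMod d),
      (∀ i j, Commute (weyl d n (p i) (q i)) (weyl d n (p j) (q j))) ∧
      Nat.card (AddSubgroup.closure (Set.range fun i => (p i, q i)) :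
        AddSubgroup (QV d n × QV d n)) = d ^ r ∧
      ρ = ((d : ℂ) ^ (n - r))⁻¹ •
        (List.ofFn fun i =>
          (d : ℂ)⁻¹ • ∑ k : ZMod d, (ch d (x i) • weyl d n (p i) (q i)) ^ k.val).prod

/-- The magic gap `MG(ρ) = 1 - max{|Ξ_ρ(p,q)| : Ξ_ρ(p,q) ≠ 0, |Ξ_ρ(p,q)| ≠ 1}`,
and `MG(ρ) = 0` if this set is empty. -/
noncomputable def magicGap (d n : ℕ) [Fact (Nat.Prime d)] (ρ : Mat d n) : ℝ :=
  let s : Finset ℝ :=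
    (Finset.univ.filter fun pq : QV d n × QV d n =>
      xi d n ρ pq ≠ 0 ∧ ‖xi d n ρ pq‖ ≠ 1).image
      fun pq => ‖xi d n ρ pq‖
  if h : s.Nonempty then 1 - s.max' h else 0

/-- Von Neumann entropy `H(ρ) = -∑ λ_i log λ_i` (natural log, eigenvalues of `ρ`),
with the convention `0 log 0 = 0`; junk value `0` on non-Hermitian matrices. -/
noncomputable def vnEnt {d n : ℕ} [Fact (Nat.Prime d)] (ρ : Mat d n) : ℝ :=
  if h : ρ.IsHermitian then -∑ i, h.eigenvalues i * Real.log (h.eigenvalues i) else 0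

/-- Rényi entropy `H_α` for `α ∈ [0,∞]`:  `H_0 = log rank`, `H_1 = H` (von Neumann),
`H_∞ = -log λ_max`, and `H_α = (1-α)⁻¹ log ∑ λ_i^α` otherwise. -/
noncomputable def renyiEnt {d n : ℕ} [Fact (Nat.Prime d)] (α : ℝ≥0∞) (ρ : Mat d n) : ℝ :=
  if h : ρ.IsHermitian then
    if α = 0 then Real.log (ρ.rank : ℝ)
    else if α = 1 then -∑ i, h.eigenvalues i * Real.log (h.eigenvalues i)
    else if α = ⊤ then -Real.log (⨆ i, h.eigenvalues i)
    else (1 - α.toReal)⁻¹ * Real.log (∑ i, h.eigenvalues i ^ α.toReal)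
  else 0

/-- Matrix logarithm on the support: `log ρ = U diag(log λ_i) U†` via the spectral
decomposition, with `log 0 = 0` on the kernel; junk value `0` off Hermitian matrices. -/
noncomputable def matLog {d n : ℕ} [Fact (Nat.Prime d)] (ρ : Mat d n) : Mat d n :=
  if h : ρ.IsHermitian then
    (h.eigenvectorUnitary : Mat d n) *
      Matrix.diagonal (fun i => (Real.log (h.eigenvalues i) : ℂ)) *
      star (h.eigenvectorUnitary : Mat d n)
  else 0

/-- Matrix real power on the support: `ρ^t = U diag(λ_i^t) U†`, with `0^t = 0` on the
kernel (for `t ≠ 0`); junk value `0` off Hermitian matrices. -/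
noncomputable def matRpow {d n : ℕ} [Fact (Nat.Prime d)] (ρ : Mat d n) (t : ℝ) : Mat d n :=
  if h : ρ.IsHermitian then
    (h.eigenvectorUnitary : Mat d n) *
      Matrix.diagonal (fun i => ((h.eigenvalues i ^ t : ℝ) : ℂ)) *
      star (h.eigenvectorUnitary : Mat d n)
  else 0

/-- Support inclusion `supp ρ ⊆ supp σ`, expressed as `ker σ ⊆ ker ρ`
(the correct notion for positive semidefinite matrices). -/
def suppLE {d n : ℕ} [Fact (Nat.Prime d)] (ρ σ : Mat d n) : Prop :=
  ∀ v : QV d n → ℂ, σ.mulVec v = 0 → ρ.mulVec v = 0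

/-- Relative entropy `D(ρ‖σ) = Tr[ρ(log ρ - log σ)]` when `supp ρ ⊆ supp σ`, else `+∞`. -/
noncomputable def relEnt {d n : ℕ} [Fact (Nat.Prime d)] (ρ σ : Mat d n) : EReal :=
  if suppLE ρ σ then (((ρ * (matLog ρ - matLog σ)).trace.re : ℝ) : EReal) else ⊤

/-- Sandwiched Rényi relative entropy
`D_α(ρ‖σ) = (α-1)⁻¹ log Tr[(σ^{(1-α)/(2α)} ρ σ^{(1-α)/(2α)})^α]` for `α ≠ 1`
(with `+∞` when `supp ρ ⊄ supp σ`), and `D_1 = D` the relative entropy. -/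
noncomputable def sandRenyi {d n : ℕ} [Fact (Nat.Prime d)] (α : ℝ) (ρ σ : Mat d n) :
    EReal :=
  if α = 1 then relEnt ρ σ
  else if suppLE ρ σ then
    let x : ℝ := (α - 1)⁻¹ * Real.log
      ((matRpow (matRpow σ ((1 - α) / (2 * α)) * ρ * matRpow σ ((1 - α) / (2 * α)))
        α).trace.re)
    (x : EReal)
  else ⊤

/-- The key unitary `U|i,j⟩ = |N g₁₁ i - N g₁₀ j, -N g₀₁ i + N g₀₀ j⟩`,
where `N = (det G)⁻¹` in `ℤ_d`. -/
noncomputable def convU (d n : ℕ) [Fact (Nat.Prime d)] (g00 g01 g10 g11 : ZMod d) :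
    Matrix (QV d n × QV d n) (QV d n × QV d n) ℂ :=
  Matrix.of fun kl ij =>
    if kl = ((fun a => (g00 * g11 - g01 * g10)⁻¹ * g11 * ij.1 a
                      - (g00 * g11 - g01 * g10)⁻¹ * g10 * ij.2 a : QV d n),
             (fun a => -((g00 * g11 - g01 * g10)⁻¹ * g01) * ij.1 a
                      + (g00 * g11 - g01 * g10)⁻¹ * g00 * ij.2 a : QV d n))
    then 1 else 0

/-- Tensor (Kronecker) product of two `n`-qudit operators, on the doubled system. -/
def kron {d n : ℕ} (ρ σ : Mat d n) : Matrix (QV d n × QV d n) (QV d n × QV d n) ℂ :=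
  Matrix.of fun ij kl => ρ ij.1 kl.1 * σ ij.2 kl.2

/-- Partial trace over the second `n`-qudit factor. -/
noncomputable def ptrB {d n : ℕ} [Fact (Nat.Prime d)]
    (M : Matrix (QV d n × QV d n) (QV d n × QV d n) ℂ) : Mat d n :=
  Matrix.of fun i i' => ∑ j : QV d n, M (i, j) (i', j)

/-- The convolution `ρ ⊠ σ = Tr_B[U (ρ ⊗ σ) U†]` with parameter matrix
`G = [g₀₀, g₀₁; g₁₀, g₁₁]`. -/
noncomputable def conv (d n : ℕ) [Fact (Nat.Prime d)] (g00 g01 g10 g11 : ZMod d)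
    (ρ σ : Mat d n) : Mat d n :=
  ptrB (convU d n g00 g01 g10 g11 * kron ρ σ * (convU d n g00 g01 g10 g11)ᴴ)

/-- The beam-splitter unitary `U_{s,t}|i,j⟩ = |s i + t j, t i - s j⟩`. -/
noncomputable def bsU (d n : ℕ) [Fact (Nat.Prime d)] (s t : ZMod d) :
    Matrix (QV d n × QV d n) (QV d n × QV d n) ℂ :=
  Matrix.of fun kl ij =>
    if kl = ((fun a => s * ij.1 a + t * ij.2 a : QV d n),
             (fun a => t * ij.1 a - s * ij.2 a : QV d n))
    then 1 else 0

/-- The beam-splitter convolution `ρ ⊠_{s,t} σ = Tr_B[U_{s,t} (ρ ⊗ σ) U_{s,t}†]`. -/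
noncomputable def bsConv (d n : ℕ) [Fact (Nat.Prime d)] (s t : ZMod d)
    (ρ σ : Mat d n) : Mat d n :=
  ptrB (bsU d n s t * kron ρ σ * (bsU d n s t)ᴴ)

/-- Iterated self-convolution: `⊠^0 ρ = ρ` and `⊠^{N+1} ρ = (⊠^N ρ) ⊠ ρ`. -/
noncomputable def bsIter (d n : ℕ) [Fact (Nat.Prime d)] (s t : ZMod d) :
    ℕ → Mat d n → Mat d n
  | 0, ρ => ρ
  | N + 1, ρ => bsConv d n s t (bsIter d n s t N ρ) ρ

/-- `ρ` is the pure stabilizer state `|ψ⟩⟨ψ|` with stabilizer label group `S ⊆ V^n`: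
`S` has order `d^n` and `ψ` is a common eigenvector of all `w(p,q)`, `(p,q) ∈ S`. -/
noncomputable def IsPureStabilizerWithGroup (d n : ℕ) [Fact (Nat.Prime d)]
    (ρ : Mat d n) (S : AddSubgroup (QV d n × QV d n)) : Prop :=
  Nat.card S = d ^ n ∧
    ∃ ψ : QV d n → ℂ, ψ ≠ 0 ∧
      ρ = Matrix.of (fun a b => ψ a * starRingEnd ℂ (ψ b)) ∧
      ∀ pq ∈ S, ∃ c : ℂ, (weyl d n pq.1 pq.2).mulVec ψ = c • ψ

/-- `ρ` is a pure stabilizer state. -/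
noncomputable def IsPureStabilizer (d n : ℕ) [Fact (Nat.Prime d)] (ρ : Mat d n) : Prop :=
  ∃ S : AddSubgroup (QV d n × QV d n), IsPureStabilizerWithGroup d n ρ S

/-- `ρ` is a stabilizer state: a convex combination of pure stabilizer states. -/
noncomputable def IsStabilizerState (d n : ℕ) [Fact (Nat.Prime d)] (ρ : Mat d n) : Prop :=
  ∃ (m : ℕ) (p : Fin m → ℝ) (τ : Fin m → Mat d n),
    (∀ i, 0 ≤ p i) ∧ ∑ i, p i = 1 ∧ (∀ i, IsPureStabilizer d n (τ i)) ∧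
    ρ = ∑ i, (p i : ℂ) • τ i

/-- `U` is a Clifford unitary: a unitary mapping each Weyl operator, under conjugation,
to a complex phase times a Weyl operator. -/
noncomputable def IsClifford (d n : ℕ) [Fact (Nat.Prime d)] (U : Mat d n) : Prop :=
  U ∈ Matrix.unitaryGroup (QV d n) ℂ ∧
    ∀ pq : QV d n × QV d n, ∃ (c : ℂ) (pq' : QV d n × QV d n),
      ‖c‖ = 1 ∧ U * weyl d n pq.1 pq.2 * Uᴴ = c • weyl d n pq'.1 pq'.2

/-- The divergence-based quantum Fisher information `J(ρ; H) = Tr[ρ [H,[H, log ρ]]]`. -/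
noncomputable def fisherJ {d n : ℕ} [Fact (Nat.Prime d)] (ρ H : Mat d n) : ℝ :=
  (ρ * (H * (H * matLog ρ - matLog ρ * H) - (H * matLog ρ - matLog ρ * H) * H)).trace.re

/-- Embed a single-qudit operator at site `k` of an `n`-qudit system
(tensored with the identity elsewhere). -/
noncomputable def embedAt (d n : ℕ) (k : Fin n) (M : Matrix (ZMod d) (ZMod d) ℂ) :
    Mat d n :=
  Matrix.of fun v w => if ∀ i, i ≠ k → v i = w i then M (v k) (w k) else 0

/-- The rank-one projection `H_j^Z = |j⟩⟨j|` onto the eigenvector of `Z`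
with eigenvalue `ξ^j`. -/
noncomputable def projZ (d : ℕ) (j : ZMod d) : Matrix (ZMod d) (ZMod d) ℂ :=
  Matrix.of fun a b => if a = j ∧ b = j then 1 else 0

/-- The rank-one projection `H_j^X` onto the eigenvector of `X` with eigenvalue `ξ^j`;
its entries are `(H_j^X)_{a b} = d⁻¹ ξ^{j(b-a)}`. -/
noncomputable def projX (d : ℕ) (j : ZMod d) : Matrix (ZMod d) (ZMod d) ℂ :=
  Matrix.of fun a b => (d : ℂ)⁻¹ * ch d (j * (b - a))

/-- Total Fisher information
`J(ρ) = ∑_{k=1}^n ∑_{j ∈ ℤ_d} J(ρ; H_j^{X_k}) + J(ρ; H_j^{Z_k})`. -/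
noncomputable def fisherTotal (d n : ℕ) [Fact (Nat.Prime d)] (ρ : Mat d n) : ℝ :=
  ∑ k : Fin n, ∑ j : ZMod d,
    (fisherJ ρ (embedAt d n k (projX d j)) + fisherJ ρ (embedAt d n k (projZ d j)))

/-- Holevo capacity of a channel `E`:
`χ(E) = sup H(∑ p_i E(ρ_i)) - ∑ p_i H(E(ρ_i))` over finite ensembles of states. -/
noncomputable def holevoCap (d n : ℕ) [Fact (Nat.Prime d)] (E : Mat d n → Mat d n) : ℝ :=
  ⨆ m : ℕ, ⨆ p : Fin m → ℝ, ⨆ ρs : Fin m → Mat d n,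
    ⨆ _ : (∀ i, 0 ≤ p i) ∧ ∑ i, p i = 1 ∧ ∀ i, IsState d n (ρs i),
      (vnEnt (∑ i, (p i : ℂ) • E (ρs i)) - ∑ i, p i * vnEnt (E (ρs i)))

/-- Hilbert–Schmidt norm `‖A‖₂ = (Tr[A†A])^{1/2}`. -/
noncomputable def hsNorm {d n : ℕ} [Fact (Nat.Prime d)] (A : Mat d n) : ℝ :=
  Real.sqrt ((Aᴴ * A).trace.re)

/-- Trace norm `‖A‖₁ = Tr[(A†A)^{1/2}]`. -/
noncomputable def trNorm {d n : ℕ} [Fact (Nat.Prime d)] (A : Mat d n) : ℝ :=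
  (matRpow (Aᴴ * A) (2⁻¹ : ℝ)).trace.re

/-- Tensor product of an `n₁`-qudit operator with an `n₂`-qudit operator,
as an `(n₁+n₂)`-qudit operator. -/
def tensorMat (d n₁ n₂ : ℕ) (ρ₁ : Mat d n₁) (ρ₂ : Mat d n₂) : Mat d (n₁ + n₂) :=
  Matrix.of fun v w =>
    ρ₁ (fun i => v (Fin.castAdd n₂ i)) (fun i => w (Fin.castAdd n₂ i)) *
    ρ₂ (fun j => v (Fin.natAdd n₁ j)) (fun j => w (Fin.natAdd n₁ j))

/-! ### Qubit (`d = 2`) specific definitions -/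

/-- The `n`-qubit Weyl (Pauli) operator `w(p,q) = ⊗_i i^{-p_i q_i} Z^{p_i} X^{q_i}`. -/
noncomputable def weyl2 (n : ℕ) (p q : Fin n → ZMod 2) :
    Matrix (Fin n → ZMod 2) (Fin n → ZMod 2) ℂ :=
  Matrix.of fun k' k =>
    if k' = k + q then
      ∏ i, ((-Complex.I) ^ ((p i).val * (q i).val) *
        (-1 : ℂ) ^ ((p i * (k i + q i)).val))
    else 0

/-- The `n`-qubit characteristic function `Ξ_ρ(p,q) = Tr[ρ w(p,q)†]`. -/
noncomputable def xi2 (n : ℕ) (ρ : Matrix (Fin n → ZMod 2) (Fin n → ZMod 2) ℂ)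
    (pq : (Fin n → ZMod 2) × (Fin n → ZMod 2)) : ℂ :=
  (ρ * (weyl2 n pq.1 pq.2)ᴴ).trace

/-- The logarithmic magic gap
`LMG(ρ) = -log₂ max{|Ξ_ρ(p,q)| : Ξ_ρ(p,q) ≠ 0, |Ξ_ρ(p,q)| ≠ 1}` (`0` if the set is
empty). -/
noncomputable def lmg (n : ℕ) (ρ : Matrix (Fin n → ZMod 2) (Fin n → ZMod 2) ℂ) : ℝ :=
  let s : Finset ℝ :=
    (Finset.univ.filter fun pq : (Fin n → ZMod 2) × (Fin n → ZMod 2) =>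
      xi2 n ρ pq ≠ 0 ∧ ‖xi2 n ρ pq‖ ≠ 1).image
      fun pq => ‖xi2 n ρ pq‖
  if h : s.Nonempty then -Real.logb 2 (s.max' h) else 0

/-- `U` is an `n`-qubit Clifford unitary. -/
noncomputable def IsClifford2 (n : ℕ) (U : Matrix (Fin n → ZMod 2) (Fin n → ZMod 2) ℂ) :
    Prop :=
  U ∈ Matrix.unitaryGroup (Fin n → ZMod 2) ℂ ∧
    ∀ pq : (Fin n → ZMod 2) × (Fin n → ZMod 2),
      ∃ (c : ℂ) (pq' : (Fin n → ZMod 2) × (Fin n → ZMod 2)),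
        ‖c‖ = 1 ∧ U * weyl2 n pq.1 pq.2 * Uᴴ = c • weyl2 n pq'.1 pq'.2

/-- The T gate `diag(1, e^{iπ/4})` acting on qubit `k` of an `n`-qubit system. -/
noncomputable def tGateAt (n : ℕ) (k : Fin n) :
    Matrix (Fin n → ZMod 2) (Fin n → ZMod 2) ℂ :=
  embedAt 2 n k (Matrix.of fun a b =>
    if a = b then (if a = 0 then 1 else Complex.exp (Real.pi * Complex.I / 4)) else 0)

/-- An `n`-qubit state: positive semidefinite with trace one. -/
def IsState2 (n : ℕ) (ρ : Matrix (Fin n → ZMod 2) (Fin n → ZMod 2) ℂ) : Prop :=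
  ρ.PosSemidef ∧ ρ.trace = 1

end PaperQI

namespace PaperQI

section helpers
variable {d n : ℕ} [Fact (Nat.Prime d)]

lemma ch_eq (z : ZMod d) : ch d z = ZMod.stdAddChar z := by
  rw [ZMod.stdAddChar_apply, ZMod.toCircle_apply, ch]

lemma ch_add (a b : ZMod d) : ch d (a + b) = ch d a * ch d b := by
  simp only [ch_eq, AddChar.map_add_eq_mul]

lemma ch_ne (a : ZMod d) : ch d a ≠ 0 := Complex.exp_ne_zero _

lemma ch_inj {a b : ZMod d} (h : ch d a = ch d b) : a = b := by
  simp only [ch_eq] at h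
  exact ZMod.injective_stdAddChar h

lemma qdot_eq (p k : QV d n) : qdot p k = p ⬝ᵥ k := rfl

/-- `ψ` is an eigenvector (up to phases) of the Weyl operator with label `(p,q)`. -/
def Eig (ψ : QV d n → ℂ) (pq : QV d n × QV d n) : Prop :=
  ∃ c : ℂ, ∀ x, ch d (pq.1 ⬝ᵥ x) * ψ (x - pq.2) = c * ψ x

lemma weyl_mulVec (p q : QV d n) (ψ : QV d n → ℂ) (x : QV d n) :
    (weyl d n p q).mulVec ψ x
      = ch d (p ⬝ᵥ (x - q) + (2 : ZMod d)⁻¹ * (p ⬝ᵥ q)) * ψ (x - q) := by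
  simp only [Matrix.mulVec, dotProduct, weyl, Matrix.of_apply]
  rw [Finset.sum_eq_single (x - q)]
  · simp [qdot]
  · intro b _ hb
    rw [if_neg, zero_mul]
    rintro rfl
    simp at hb
  · simp

lemma eig_iff (ψ : QV d n → ℂ) (pq : QV d n × QV d n) :
    (∃ c : ℂ, (weyl d n pq.1 pq.2).mulVec ψ = c • ψ) ↔ Eig ψ pq := by
  have key : ∀ x, (weyl d n pq.1 pq.2).mulVec ψ x
      = ch d ((2 : ZMod d)⁻¹ * (pq.1 ⬝ᵥ pq.2) - pq.1 ⬝ᵥ pq.2)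
        * (ch d (pq.1 ⬝ᵥ x) * ψ (x - pq.2)) := by
    intro x
    rw [weyl_mulVec, ← mul_assoc, ← ch_add, dotProduct_sub]
    congr 2
    ring
  set e := ch d ((2 : ZMod d)⁻¹ * (pq.1 ⬝ᵥ pq.2) - pq.1 ⬝ᵥ pq.2) with he
  have hne : e ≠ 0 := ch_ne _
  constructor
  · rintro ⟨c, hc⟩
    refine ⟨e⁻¹ * c, fun x => ?_⟩
    have := congrFun hc x
    rw [key, Pi.smul_apply, smul_eq_mul] at this
    rw [mul_assoc, ← this, inv_mul_cancel_left₀ hne]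
  · rintro ⟨c, hc⟩
    refine ⟨e * c, funext fun x => ?_⟩
    rw [key, hc, Pi.smul_apply, smul_eq_mul, mul_assoc]

/-- Stabilizer vectors (possibly zero). -/
def Stab (ψ : QV d n → ℂ) : Prop :=
  ∃ S : Submodule (ZMod d) (QV d n × QV d n),
    n ≤ Module.finrank (ZMod d) S ∧ ∀ pq ∈ S, Eig ψ pq

lemma stab_zero : Stab (0 : QV d n → ℂ) := by
  refine ⟨⊤, ?_, fun pq _ => ⟨0, by simp⟩⟩
  simp

lemma stab_smul {ψ : QV d n → ℂ} (h : Stab ψ) (c : ℂ) : Stab (c • ψ) := by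
  obtain ⟨S, hS, h⟩ := h
  refine ⟨S, hS, fun pq hpq => ?_⟩
  obtain ⟨e, he⟩ := h pq hpq
  refine ⟨e, fun x => ?_⟩
  simp only [Pi.smul_apply, smul_eq_mul]
  linear_combination c * he x

lemma stab_affine {ψ : QV d n → ℂ} (h : Stab ψ) (g : ZMod d) (hg : g ≠ 0) (a : QV d n) :
    Stab (fun x => ψ (g • x + a)) := by
  obtain ⟨S, hS, h⟩ := h
  let f : (QV d n × QV d n) →ₗ[ZMod d] (QV d n × QV d n) :=
    LinearMap.prodMap (g • LinearMap.id) (g⁻¹ • LinearMap.id)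
  have hf : Function.Injective f := by
    rintro ⟨a, b⟩ ⟨a', b'⟩ hab
    simp only [f, LinearMap.prodMap_apply, LinearMap.smul_apply, LinearMap.id_apply,
      Prod.mk.injEq] at hab
    exact Prod.ext (smul_right_injective _ hg hab.1)
      (smul_right_injective _ (inv_ne_zero hg) hab.2)
  refine ⟨S.map f, ?_, ?_⟩
  · rw [← (Submodule.equivMapOfInjective f hf S).finrank_eq]; exact hS
  · rintro _ ⟨pq, hpq, rfl⟩
    obtain ⟨c, hc⟩ := h pq hpq
    refine ⟨(ch d (pq.1 ⬝ᵥ a))⁻¹ * c, fun x => ?_⟩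
    have := hc (g • x + a)
    rw [dotProduct_add, dotProduct_smul, ch_add] at this
    have e : g • (x - g⁻¹ • pq.2) + a = g • x + a - pq.2 := by
      rw [smul_sub, smul_inv_smul₀ hg]; abel
    simp only [f, LinearMap.prodMap_apply, LinearMap.smul_apply, LinearMap.id_apply, e,
      smul_dotProduct]
    rw [mul_assoc, ← this]
    have := ch_ne (pq.1 ⬝ᵥ a)
    field_simp

lemma eig_iso {ψ : QV d n → ℂ} (hψ : ψ ≠ 0) {p : QV d n} {pq : QV d n × QV d n}
    (h1 : Eig ψ (p, 0)) (h2 : Eig ψ pq) : p ⬝ᵥ pq.2 = 0 := by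
  obtain ⟨x, hx⟩ := Function.ne_iff.mp hψ
  obtain ⟨c, hc⟩ := h1
  obtain ⟨e, he⟩ := h2
  have h3 : ψ (x + pq.2) ≠ 0 := by
    intro h0
    have := he (x + pq.2)
    rw [h0, add_sub_cancel_right, mul_zero] at this
    exact (mul_ne_zero (ch_ne _) hx) this
  have h4 := hc x
  have h5 := hc (x + pq.2)
  simp only [sub_zero] at h4 h5
  have := ch_inj ((mul_right_cancel₀ h3 h5).trans (mul_right_cancel₀ hx h4).symm)
  rw [dotProduct_add] at this
  simpa using this

lemma stab_mul {ψ φ : QV d n → ℂ} (h : Stab ψ) (h' : Stab φ) : Stab (ψ * φ) := by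
  by_cases hψ : ψ = 0
  · rw [hψ, zero_mul]; exact stab_zero
  by_cases hφ : φ = 0
  · rw [hφ, mul_zero]; exact stab_zero
  obtain ⟨S, hS, h⟩ := h
  obtain ⟨S', hS', h'⟩ := h'
  let f : (S × S') →ₗ[ZMod d] QV d n :=
    LinearMap.coprod (LinearMap.snd _ _ _ ∘ₗ S.subtype) (-(LinearMap.snd _ _ _ ∘ₗ S'.subtype))
  have hf : ∀ s, f s = s.1.1.2 - s.2.1.2 := by
    intro s; simp [f, sub_eq_add_neg]
  let g0 : (S × S') →ₗ[ZMod d] (QV d n × QV d n) :=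
    LinearMap.prod
      (LinearMap.coprod (LinearMap.fst _ _ _ ∘ₗ S.subtype) (LinearMap.fst _ _ _ ∘ₗ S'.subtype))
      (LinearMap.snd _ _ _ ∘ₗ S.subtype ∘ₗ LinearMap.fst _ _ _)
  have hg0 : ∀ s, g0 s = (s.1.1.1 + s.2.1.1, s.1.1.2) := by
    intro s; simp [g0]
  let g : LinearMap.ker f →ₗ[ZMod d] (QV d n × QV d n) := g0 ∘ₗ (LinearMap.ker f).subtype
  refine ⟨LinearMap.range g, ?_, ?_⟩
  · have e1 := f.finrank_range_add_finrank_ker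
    have e2 := LinearMap.finrank_range_add_finrank_ker (K := ZMod d) (V := LinearMap.ker f) g
    rw [Module.finrank_prod] at e1
    have e3 := Subspace.finrank_add_finrank_dualAnnihilator_eq (LinearMap.range f)
    have e5 : Module.finrank (ZMod d) (QV d n) = n := by simp
    have hk : ∀ s : LinearMap.ker g, s.1.1.1.1.2 = 0 ∧ s.1.1.2.1.2 = 0 ∧
        s.1.1.2.1.1 = - s.1.1.1.1.1 := by
      rintro ⟨⟨s, hs⟩, hs'⟩
      rw [LinearMap.mem_ker, hf] at hs
      have hs'' : g0 s = 0 := hs'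
      rw [hg0, Prod.mk_eq_zero] at hs''
      refine ⟨hs''.2, ?_, ?_⟩
      · have := sub_eq_zero.mp hs
        exact this.symm.trans hs''.2
      · exact eq_neg_of_add_eq_zero_right hs''.1
    let D : QV d n →ₗ[ZMod d] Module.Dual (ZMod d) (QV d n) := dotProductBilin (ZMod d) (ZMod d)
    let k0 : LinearMap.ker g →ₗ[ZMod d] Module.Dual (ZMod d) (QV d n) :=
      D ∘ₗ LinearMap.fst _ _ _ ∘ₗ S.subtype ∘ₗ LinearMap.fst _ _ _ ∘ₗ
        (LinearMap.ker f).subtype ∘ₗ (LinearMap.ker g).subtype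
    have hk0 : ∀ s x, k0 s x = s.1.1.1.1.1 ⬝ᵥ x := fun s x => rfl
    have hmem : ∀ s, k0 s ∈ (LinearMap.range f).dualAnnihilator := by
      intro s
      rw [Submodule.mem_dualAnnihilator]
      rintro _ ⟨t, rfl⟩
      obtain ⟨a1, a2, a3⟩ := hk s
      have b1 : s.1.1.1.1 = (s.1.1.1.1.1, 0) := Prod.ext rfl a1
      have b2 : s.1.1.2.1 = (-s.1.1.1.1.1, 0) := Prod.ext a3 a2
      have c1 := h _ s.1.1.1.2
      have c2 := h' _ s.1.1.2.2
      rw [b1] at c1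
      rw [b2] at c2
      have d1 := eig_iso hψ c1 (h _ t.1.2)
      have d2 := eig_iso hφ c2 (h' _ t.2.2)
      rw [neg_dotProduct, neg_eq_zero] at d2
      rw [hk0, hf, dotProduct_sub, d1, d2, sub_zero]
    let k := k0.codRestrict _ hmem
    have hkinj : Function.Injective k := by
      refine (injective_iff_map_eq_zero k).mpr fun s hs => ?_
      have hs' : k0 s = 0 := congrArg Subtype.val hs
      have z : s.1.1.1.1.1 = 0 := by
        apply dotProduct_eq_zero
        intro w
        rw [← hk0, hs']; rfl
      obtain ⟨a1, a2, a3⟩ := hk s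
      apply Subtype.ext
      apply Subtype.ext
      refine Prod.ext (Subtype.ext (Prod.ext z a1)) (Subtype.ext (Prod.ext ?_ a2))
      rw [a3, z]; simp
    have e4 := LinearMap.finrank_le_finrank_of_injective hkinj
    omega
  · rintro _ ⟨⟨s, hs0⟩, rfl⟩
    have hs := hs0
    rw [LinearMap.mem_ker, hf, sub_eq_zero] at hs
    have : g ⟨s, hs0⟩ = g0 s := rfl
    rw [this, hg0]
    obtain ⟨c, hc⟩ := h _ s.1.2
    obtain ⟨e, he⟩ := h' _ s.2.2
    refine ⟨c * e, fun x => ?_⟩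
    simp only [Pi.mul_apply, add_dotProduct, ch_add]
    have h1 := hc x
    have h2 := he x
    rw [← hs] at h2
    linear_combination (ch d (s.2.1.1 ⬝ᵥ x) * φ (x - s.1.1.2)) * h1 + c * ψ x * h2

lemma stab_of_pure {τ : Mat d n} (h : IsPureStabilizer d n τ) :
    ∃ ψ : QV d n → ℂ, ψ ≠ 0 ∧ Stab ψ ∧
      τ = Matrix.of (fun a b => ψ a * starRingEnd ℂ (ψ b)) := by
  obtain ⟨S, hS, ψ, h0, h1, h2⟩ := h
  refine ⟨ψ, h0, ⟨AddSubgroup.toZModSubmodule d S, ?_, ?_⟩, h1⟩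
  · have hc : Nat.card (AddSubgroup.toZModSubmodule d S) = d ^ n := hS
    rw [Module.natCard_eq_pow_finrank (K := ZMod d), Nat.card_zmod] at hc
    exact (Nat.pow_right_injective (Fact.out : Nat.Prime d).two_le hc).ge
  · intro pq hpq
    exact (eig_iff ψ pq).mp (h2 pq hpq)

lemma pure_of_stab {ψ : QV d n → ℂ} (h0 : ψ ≠ 0) (h : Stab ψ) :
    IsPureStabilizer d n (Matrix.of (fun a b => ψ a * starRingEnd ℂ (ψ b))) := by
  obtain ⟨S, hS, h⟩ := h
  obtain ⟨T, hT⟩ : ∃ T : Submodule (ZMod d) S, Module.finrank (ZMod d) T = n := by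
    obtain ⟨f, hf⟩ := (finrank_le_iff_exists_linearMap (R := ZMod d) (M := QV d n) (M' := S)).mp
      (by simpa using hS)
    exact ⟨LinearMap.range f, by rw [LinearMap.finrank_range_of_inj hf]; simp⟩
  refine ⟨(T.map S.subtype).toAddSubgroup, ?_, ψ, h0, rfl, ?_⟩
  · have : Nat.card (T.map S.subtype) = d ^ n := by
      rw [Module.natCard_eq_pow_finrank (K := ZMod d), Nat.card_zmod,
        ← (Submodule.equivMapOfInjective S.subtype S.injective_subtype T).finrank_eq, hT]
    exact this
  · rintro _ ⟨s, _, rfl⟩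
    exact (eig_iff ψ _).mpr (h _ s.2)

/-- The (unnormalised) projector onto a vector. -/
noncomputable def proj (ψ : QV d n → ℂ) : Mat d n :=
  Matrix.of (fun a b => ψ a * starRingEnd ℂ (ψ b))

lemma proj_smul (r : ℝ) (hr : 0 ≤ r) (ψ : QV d n → ℂ) :
    proj (((Real.sqrt r : ℝ) : ℂ) • ψ) = (r : ℂ) • proj ψ := by
  ext a b
  have : ((Real.sqrt r : ℝ) : ℂ) * ((Real.sqrt r : ℝ) : ℂ) = (r : ℂ) := by
    rw [← Complex.ofReal_mul, Real.mul_self_sqrt hr]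
  simp only [proj, Matrix.of_apply, Pi.smul_apply, smul_eq_mul, map_mul, Complex.conj_ofReal,
    Matrix.smul_apply]
  linear_combination (ψ a * starRingEnd ℂ (ψ b)) * this

lemma proj_zero : proj (0 : QV d n → ℂ) = 0 := by
  ext a b; simp [proj]

lemma stabState_of_sum {ι : Type} [Fintype ι] (ψ : ι → QV d n → ℂ) (h : ∀ i, Stab (ψ i))
    (hne : ∃ i, ψ i ≠ 0) : IsStabilizerState d n (∑ i, proj (ψ i)) := by
  let J := {i // ψ i ≠ 0}
  have hJ : Nonempty J := by obtain ⟨i, hi⟩ := hne; exact ⟨⟨i, hi⟩⟩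
  let k := Fintype.card J
  have hk : (0 : ℝ) < k := by exact_mod_cast Fintype.card_pos
  let e : J ≃ Fin k := Fintype.equivFin J
  refine ⟨k, fun _ => (k : ℝ)⁻¹,
    fun i => proj (((Real.sqrt k : ℝ) : ℂ) • ψ (e.symm i).1), fun _ => by positivity, ?_, ?_, ?_⟩
  · simp [hk.ne']
  · intro i
    apply pure_of_stab
    · apply smul_ne_zero _ (e.symm i).2
      exact_mod_cast (Real.sqrt_pos.mpr hk).ne'
    · exact stab_smul (h _) _
  · have : ∀ i, ((((k : ℝ)⁻¹ : ℝ)) : ℂ) • proj (((Real.sqrt k : ℝ) : ℂ) • ψ (e.symm i).1)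
        = proj (ψ (e.symm i).1) := by
      intro i
      rw [proj_smul _ hk.le, smul_smul, ← Complex.ofReal_mul, inv_mul_cancel₀ hk.ne']
      simp
    simp only [this]
    rw [Equiv.sum_comp e.symm (fun j : J => proj (ψ j.1))]
    symm
    rw [← Fintype.sum_subtype_add_sum_subtype (fun i => ψ i ≠ 0) (fun i => proj (ψ i))]
    have hz : ∑ i : {i // ¬ (ψ i ≠ 0)}, proj (ψ i.1) = 0 := by
      refine Finset.sum_eq_zero fun i _ => ?_
      rw [not_not.mp i.2, proj_zero]
    rw [hz, add_zero]

lemma sum_of_stabState {ρ : Mat d n} (h : IsStabilizerState d n ρ) :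
    ∃ (m : ℕ) (ψ : Fin m → QV d n → ℂ), (∀ i, Stab (ψ i)) ∧ (∃ i, ψ i ≠ 0) ∧
      ρ = ∑ i, proj (ψ i) := by
  obtain ⟨m, p, τ, hp, hs, hτ, rfl⟩ := h
  choose ψ h0 h1 h2 using fun i => stab_of_pure (hτ i)
  refine ⟨m, fun i => ((Real.sqrt (p i) : ℝ) : ℂ) • ψ i, fun i => stab_smul (h1 i) _, ?_, ?_⟩
  · have : ∃ i, p i ≠ 0 := by
      by_contra! hc
      simp [hc] at hs
    obtain ⟨i, hi⟩ := this
    refine ⟨i, smul_ne_zero ?_ (h0 i)⟩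
    exact_mod_cast (Real.sqrt_pos.mpr (lt_of_le_of_ne (hp i) hi.symm)).ne'
  · refine Finset.sum_congr rfl fun i _ => ?_
    rw [proj_smul _ (hp i), h2 i]; rfl

lemma conv_apply (g00 g01 g10 g11 : ZMod d) (hdet : g00 * g11 - g01 * g10 ≠ 0)
    (ρ σ : Mat d n) (x y : QV d n) :
    conv d n g00 g01 g10 g11 ρ σ x y = ∑ j,
      ρ (g00 • x + g10 • j) (g00 • y + g10 • j) * σ (g01 • x + g11 • j) (g01 • y + g11 • j) := by
  have hU : ∀ (x j : QV d n) (ij : QV d n × QV d n), convU d n g00 g01 g10 g11 (x, j) ij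
      = if ij = (g00 • x + g10 • j, g01 • x + g11 • j) then 1 else 0 := by
    intro x j ij
    simp only [convU, Matrix.of_apply]
    congr 1
    apply propext
    obtain ⟨a, b⟩ := ij
    simp only [Prod.mk.injEq]
    constructor
    · rintro ⟨rfl, rfl⟩
      constructor <;> ext t <;> simp only [Pi.add_apply, Pi.smul_apply, smul_eq_mul] <;>
        field_simp <;> ring
    · rintro ⟨rfl, rfl⟩
      constructor <;> ext t <;> simp only [Pi.add_apply, Pi.smul_apply, smul_eq_mul] <;>
        field_simp <;> ring
  simp only [conv, ptrB, Matrix.of_apply]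
  refine Finset.sum_congr rfl fun j _ => ?_
  rw [Matrix.mul_apply]
  simp only [Matrix.mul_apply, Matrix.conjTranspose_apply, hU]
  simp [kron]

end helpers

/-- Convolutional stability: the convolution of two stabilizer
states is a stabilizer state. -/
theorem statement10 (d n : ℕ) [Fact (Nat.Prime d)] (hd : Odd d) (hn : 1 ≤ n)
    (g00 g01 g10 g11 : ZMod d) (h00 : g00 ≠ 0) (h01 : g01 ≠ 0)
    (h10 : g10 ≠ 0) (h11 : g11 ≠ 0) (hdet : g00 * g11 - g01 * g10 ≠ 0)
    (ρ σ : Mat d n) (hρ : IsState d n ρ) (hσ : IsState d n σ)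
    (hρs : IsStabilizerState d n ρ) (hσs : IsStabilizerState d n σ) :
    IsStabilizerState d n (conv d n g00 g01 g10 g11 ρ σ) := by
  obtain ⟨m, ψ, hψ, ⟨i0, hi0⟩, rfl⟩ := sum_of_stabState hρs
  obtain ⟨m', φ, hφ, ⟨j0, hj0⟩, rfl⟩ := sum_of_stabState hσs
  let v : (QV d n × Fin m × Fin m') → QV d n → ℂ := fun t =>
    (fun x => ψ t.2.1 (g00 • x + g10 • t.1)) * (fun x => φ t.2.2 (g01 • x + g11 • t.1))
  have key : conv d n g00 g01 g10 g11 (∑ i, proj (ψ i)) (∑ i, proj (φ i))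
      = ∑ t, proj (v t) := by
    ext x y
    rw [conv_apply _ _ _ _ hdet]
    simp only [Matrix.sum_apply, Fintype.sum_prod_type, Finset.sum_mul_sum]
    refine Finset.sum_congr rfl fun j _ => Finset.sum_congr rfl fun a _ =>
      Finset.sum_congr rfl fun b _ => ?_
    simp only [proj, v, Matrix.of_apply, Pi.mul_apply, map_mul]
    ring
  rw [key]
  apply stabState_of_sum
  · intro t
    exact stab_mul (stab_affine (hψ _) _ h00 _) (stab_affine (hφ _) _ h01 _)
  · obtain ⟨a, ha⟩ := Function.ne_iff.mp hi0
    obtain ⟨b, hb⟩ := Function.ne_iff.mp hj0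
    set N := (g00 * g11 - g01 * g10)⁻¹ with hN
    refine ⟨((N * g00) • b - (N * g01) • a, i0, j0), Function.ne_iff.mpr
      ⟨(N * g11) • a - (N * g10) • b, ?_⟩⟩
    have e1 : g00 • ((N * g11) • a - (N * g10) • b) + g10 • ((N * g00) • b - (N * g01) • a) = a := by
      ext t
      simp only [Pi.add_apply, Pi.sub_apply, Pi.smul_apply, smul_eq_mul, hN]
      field_simp
      ring
    have e2 : g01 • ((N * g11) • a - (N * g10) • b) + g11 • ((N * g00) • b - (N * g01) • a) = b := by
      ext t
      simp only [Pi.add_apply, Pi.sub_apply, Pi.smul_apply, smul_eq_mul, hN]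
      field_simp
      ring
    simp only [v, Pi.mul_apply, e1, e2]
    exact mul_ne_zero ha hb

end PaperQI
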